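/- Strictification of monoidal categories: for every monoidal category C there exist a monoidal category D which is strict — i.e. (X ⊗ Y) ⊗ Z = X ⊗ (Y ⊗ Z) and 𝟙 ⊗ X = X = X ⊗ 𝟙 hold as equalities of objects of D, with the associator and unitors of D being the isomorphisms induced by these equalities (eqToIso) — together with a monoidal equivalence between C and D. -/

import Mathlib

/-!
The strictification is Mac Lane's category of words. Its objects are finite lists of objects
of `C`; a list `[x₁, …, xₙ]` is evaluated in `C` as `x₁ ⊗ (x₂ ⊗ (… ⊗ (xₙ ⊗ 𝟙)))`, and a morphism
of lists is a morphism of `C` between their evaluations. Evaluation is then fully faithful by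
construction, and essentially surjective since `[x]` evaluates to `x ⊗ 𝟙 ≅ x`.

The tensor product of lists is concatenation, which is strictly associative and unital. There is
a canonical isomorphism `μ : eval l ⊗ eval m ≅ eval (l ++ m)`, defined by recursion on `l`, and
tensor products of morphisms are defined by conjugating with `μ`. The associator and the unitors
are taken to be `eqToIso` of the list identities. The monoidal axioms can be checked after applying
the faithful evaluation functor, provided evaluation sends these isomorphisms to the associator and
unitors of `C`, up to `μ`; this is the content of `evalMu_assoc` and `evalMu_nil`, proved by
induction on the first list. Evaluation is thus a monoidal equivalence from lists to `C`, and
its inverse is the required functor.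
-/

open CategoryTheory MonoidalCategory

universe v u

/-- A strictification of a monoidal category `C`: a monoidal category `D`
which is strict — the tensor product is associative and unital on the nose,
with associator and unitors induced by these equalities of objects — together
with a monoidal equivalence between `C` and `D`. -/
structure Strictification (C : Type u) [Category.{v} C] [MonoidalCategory C] where
  /-- the strict monoidal category -/
  D : Type (max u v)
  [cat : Category.{max u v} D]
  [mon : MonoidalCategory D]
  tensor_assoc : ∀ X Y Z : D, (X ⊗ Y) ⊗ Z = X ⊗ (Y ⊗ Z)
  unit_tensor : ∀ X : D, 𝟙_ D ⊗ X = X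
  tensor_unit : ∀ X : D, X ⊗ 𝟙_ D = X
  associator_eq : ∀ X Y Z : D, α_ X Y Z = eqToIso (tensor_assoc X Y Z)
  leftUnitor_eq : ∀ X : D, λ_ X = eqToIso (unit_tensor X)
  rightUnitor_eq : ∀ X : D, ρ_ X = eqToIso (tensor_unit X)
  /-- the functor underlying the monoidal equivalence -/
  F : C ⥤ D
  [monF : F.Monoidal]
  [equivF : F.IsEquivalence]

namespace Strictification

variable {C : Type u} [Category.{v} C] [MonoidalCategory C]

/-- The right-bracketed tensor product `x₁ ⊗ (x₂ ⊗ (… ⊗ (xₙ ⊗ 𝟙)))` of a list of objects. -/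
def eval : List C → C
  | [] => 𝟙_ C
  | x :: l => x ⊗ eval l

/-- The canonical rebracketing isomorphism from a tensor product of evaluations to the evaluation
of the concatenation. -/
def evalMu : ∀ l m : List C, eval l ⊗ eval m ≅ eval (l ++ m)
  | [], m => λ_ (eval m)
  | x :: l, m => α_ x (eval l) (eval m) ≪≫ whiskerLeftIso x (evalMu l m)

lemma eqToHom_eval_cons (x : C) {l m : List C} (h : l = m) :
    eqToHom (congrArg eval (congrArg (List.cons x) h)) =
      x ◁ eqToHom (congrArg eval h) := by
  subst h
  exact (whiskerLeft_id _ _).symm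

/-- Inductive step of `evalMu_assoc`, for arbitrary objects and morphisms of `C`: the pentagon
extends a compatibility with the associator from `a` to `x ⊗ a`. -/
lemma assoc_step (x : C) {a b c ab bc abc abc' : C} (p : a ⊗ b ⟶ ab) (q : ab ⊗ c ⟶ abc)
    (r : abc ⟶ abc') (s : b ⊗ c ⟶ bc) (t : a ⊗ bc ⟶ abc')
    (h : p ▷ c ≫ q ≫ r = (α_ a b c).hom ≫ a ◁ s ≫ t) :
    ((α_ x a b).hom ≫ x ◁ p) ▷ c ≫ ((α_ x ab c).hom ≫ x ◁ q) ≫ x ◁ r =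
      (α_ (x ⊗ a) b c).hom ≫ (x ⊗ a) ◁ s ≫ (α_ x a bc).hom ≫ x ◁ t := by
  have h' := congrArg (fun f => x ◁ f) h
  simp only [whiskerLeft_comp] at h'
  simp [h']

/-- The two ways of rebracketing a triple tensor product of evaluations agree. -/
lemma evalMu_assoc (l m n : List C) :
    (evalMu l m).hom ▷ eval n ≫ (evalMu (l ++ m) n).hom ≫
        eqToHom (congrArg eval (List.append_assoc l m n)) =
      (α_ _ _ _).hom ≫ eval l ◁ (evalMu m n).hom ≫ (evalMu l (m ++ n)).hom := by
  induction l with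
  | nil =>
    refine (congrArg (fun k => _ ≫ k) (Category.comp_id _)).trans ?_
    change (λ_ (eval m)).hom ▷ eval n ≫ (evalMu m n).hom =
      (α_ (𝟙_ C) _ _).hom ≫ 𝟙_ C ◁ (evalMu m n).hom ≫ (λ_ _).hom
    simp
  | cons x l ih =>
    exact (congrArg (fun k => _ ≫ _ ≫ k)
      (eqToHom_eval_cons x (List.append_assoc l m n))).trans (assoc_step x _ _ _ _ _ ih)

/-- Inductive step of `evalMu_nil`, for arbitrary objects and morphisms of `C`. -/
lemma unit_step (x : C) {a b : C} (p : a ⊗ 𝟙_ C ⟶ b) (r : b ⟶ a) (h : p ≫ r = (ρ_ a).hom) :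
    ((α_ x a (𝟙_ C)).hom ≫ x ◁ p) ≫ x ◁ r = (ρ_ (x ⊗ a)).hom := by
  rw [Category.assoc, ← whiskerLeft_comp, h, rightUnitor_tensor_hom]

/-- Concatenating with the empty list on the right corresponds to the right unitor. -/
lemma evalMu_nil (l : List C) :
    (evalMu l []).hom ≫ eqToHom (congrArg eval (List.append_nil l)) = (ρ_ (eval l)).hom := by
  induction l with
  | nil => exact (Category.comp_id _).trans unitors_equal
  | cons x l ih =>
    exact (congrArg (fun k => _ ≫ k) (eqToHom_eval_cons x (List.append_nil l))).trans
      (unit_step x _ _ ih)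

variable (C) in
/-- Words in the objects of `C`, the objects of the strictification. The list is wrapped in a
structure living in the universe `max u v`. -/
structure Word : Type (max u v) where
  /-- the underlying list of objects -/
  list : List C

/-- Morphisms of words are morphisms between the evaluations, lifted to the universe
`max u v`. -/
instance : Category.{max u v} (Word.{v, u} C) where
  Hom X Y := ULift.{max u v} (eval X.list ⟶ eval Y.list)
  id X := ⟨𝟙 (eval X.list)⟩
  comp f g := ⟨f.down ≫ g.down⟩

variable (C) in
/-- Evaluation of words, as a functor to `C`. -/
@[simps]
def evalFunctor : Word.{v, u} C ⥤ C where
  obj X := eval X.list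
  map f := f.down

instance : (evalFunctor C).Faithful where
  map_injective h := ULift.ext _ _ h

instance : (evalFunctor C).Full where
  map_surjective f := ⟨⟨f⟩, rfl⟩

instance : (evalFunctor C).EssSurj where
  mem_essImage x := ⟨⟨[x]⟩, ⟨ρ_ x⟩⟩

instance : (evalFunctor C).IsEquivalence where

/-- Concatenation of words, with tensor products of morphisms conjugated by `evalMu`, and with
associator and unitors given by equalities of lists. -/
instance : MonoidalCategoryStruct (Word.{v, u} C) where
  tensorObj X Y := ⟨X.list ++ Y.list⟩
  tensorUnit := ⟨[]⟩
  whiskerLeft X _ _ f := ⟨(evalMu _ _).inv ≫ eval X.list ◁ f.down ≫ (evalMu _ _).hom⟩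
  whiskerRight f Y := ⟨(evalMu _ _).inv ≫ f.down ▷ eval Y.list ≫ (evalMu _ _).hom⟩
  tensorHom f g := ⟨(evalMu _ _).inv ≫ (f.down ⊗ₘ g.down) ≫ (evalMu _ _).hom⟩
  associator X Y Z := eqToIso (congrArg Word.mk (List.append_assoc X.list Y.list Z.list))
  leftUnitor _ := eqToIso rfl
  rightUnitor X := eqToIso (congrArg Word.mk (List.append_nil X.list))

variable (C) in
/-- The monoidal structure on words is induced from that of `C` along evaluation. -/
def inducingData : Monoidal.InducingFunctorData (evalFunctor C) where
  μIso X Y := evalMu X.list Y.list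
  εIso := Iso.refl _
  whiskerLeft_eq _ _ _ _ := rfl
  whiskerRight_eq _ _ := rfl
  tensorHom_eq _ _ := rfl
  associator_eq X Y Z := by
    refine (eqToHom_map (evalFunctor C)
      (congrArg Word.mk (List.append_assoc X.list Y.list Z.list))).trans ?_
    change eqToHom (congrArg eval (List.append_assoc X.list Y.list Z.list)) =
      ((evalMu (X.list ++ Y.list) Z.list).inv ≫ ((evalMu X.list Y.list).inv ⊗ₘ 𝟙 _)) ≫
        (α_ _ _ _).hom ≫ (𝟙 _ ⊗ₘ (evalMu Y.list Z.list).hom) ≫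
          (evalMu X.list (Y.list ++ Z.list)).hom
    rw [id_tensorHom, ← evalMu_assoc]
    simp
  leftUnitor_eq X := by
    change 𝟙 (eval X.list) =
      ((λ_ (eval X.list)).inv ≫ (𝟙 (𝟙_ C) ⊗ₘ 𝟙 _)) ≫ (λ_ (eval X.list)).hom
    simp
  rightUnitor_eq X := by
    refine (eqToHom_map (evalFunctor C) (congrArg Word.mk (List.append_nil X.list))).trans ?_
    have key {a b : C} (i : a ⊗ 𝟙_ C ≅ b) (e : b ⟶ a) (h : i.hom ≫ e = (ρ_ a).hom) :
        e = (i.inv ≫ (𝟙 a ⊗ₘ 𝟙 (𝟙_ C))) ≫ (ρ_ a).hom := by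
      rw [← h, id_tensorHom_id, Category.comp_id, Iso.inv_hom_id_assoc]
    exact key (evalMu X.list []) _ (evalMu_nil X.list)

instance : MonoidalCategory (Word.{v, u} C) :=
  Monoidal.induced (evalFunctor C) (inducingData C)

instance : (evalFunctor C).Monoidal :=
  Monoidal.fromInducedMonoidal (evalFunctor C) (inducingData C)

end Strictification

/-- Every monoidal category is monoidally equivalent to a strict monoidal
category. -/
theorem exists_strictification (C : Type u) [Category.{v} C] [MonoidalCategory C] :
    Nonempty (Strictification C) := by
  let : (Strictification.evalFunctor C).asEquivalence.functor.Monoidal :=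
    inferInstanceAs (Strictification.evalFunctor C).Monoidal
  let := (Strictification.evalFunctor C).asEquivalence.inverseMonoidal
  exact ⟨{
    D := Strictification.Word.{v, u} C
    tensor_assoc := fun X Y Z => congrArg Strictification.Word.mk (List.append_assoc X.list Y.list Z.list)
    unit_tensor := fun _ => rfl
    tensor_unit := fun X => congrArg Strictification.Word.mk (List.append_nil X.list)
    associator_eq := fun _ _ _ => rfl
    leftUnitor_eq := fun _ => rfl
    rightUnitor_eq := fun _ => rfl
    F := (Strictification.evalFunctor C).asEquivalence.inverse }⟩
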